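/- Let S̃_8(8) ⊆ Sp_6(ℤ/8ℤ) denote the full preimage of the embedded copy of S_8 ⊆ Sp_6(ℤ/2ℤ) under the reduction map Sp_6(ℤ/8ℤ) → Sp_6(ℤ/2ℤ). Then no proper subgroup of S̃_8(8) has image under reduction modulo 2 equal to all of the embedded S_8; that is, every subgroup G ⊆ S̃_8(8) whose mod-2 image equals the embedded S_8 satisfies G = S̃_8(8). -/

import Mathlib

open Matrix

/-- The standard symplectic matrix `Ω`, block-diagonal with `2×2` blocks `[[0,1],[-1,0]]`. -/
def OmegaMat (g : ℕ) (R : Type) [CommRing R] : Matrix (Fin (2*g)) (Fin (2*g)) R :=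
  Matrix.of fun i j =>
    if (i : ℕ) + 1 = (j : ℕ) ∧ (j : ℕ) % 2 = 1 then 1
    else if (j : ℕ) + 1 = (i : ℕ) ∧ (i : ℕ) % 2 = 1 then -1 else 0

/-- The symplectic group `Sp_{2g}(R)`, as a set of invertible matrices:
those `S` with `SᵀΩS = Ω`. -/
def SpSet (g : ℕ) (R : Type) [CommRing R] : Set (GL (Fin (2*g)) R) :=
  {S | (S : Matrix (Fin (2*g)) (Fin (2*g)) R)ᵀ * OmegaMat g R * S = OmegaMat g R}

/-- The general symplectic group `GSp_{2g}(R)`, as a set of invertible matrices: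
those `S` with `SᵀΩS = m·Ω` for some unit `m` (the multiplier). -/
def GSpSet (g : ℕ) (R : Type) [CommRing R] : Set (GL (Fin (2*g)) R) :=
  {S | ∃ m : Rˣ, (S : Matrix (Fin (2*g)) (Fin (2*g)) R)ᵀ * OmegaMat g R * S = (m : R) • OmegaMat g R}

/-- The all-ones vector `t ∈ V = (ℤ/2ℤ)^{2g+2}`. -/
def tvec (g : ℕ) : Fin (2*g+2) → ZMod 2 := fun _ => 1

/-- The line spanned by `t`. -/
def tline (g : ℕ) : Submodule (ZMod 2) (Fin (2*g+2) → ZMod 2) :=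
  Submodule.span (ZMod 2) {tvec g}

/-- `t^⊥`: the vectors of `V` orthogonal to `t` for the standard bilinear form
`⟨u,v⟩ = ∑ uᵢvᵢ`, i.e. those whose coordinates sum to zero. -/
def tperp (g : ℕ) : Set (Fin (2*g+2) → ZMod 2) := {v | ∑ i, v i = 0}

/-- The matrix of the map `ψ : M → V` sending the symplectic basis vector `f_{1,n}`
(column `2n-2`, 0-based) of `M = (ℤ/2ℤ)^{2g}` to `ē_1 + ⋯ + ē_{2n}` and `f_{2,n}`
(column `2n-1`) to `ē_{2n+1} + ē_1 + ⋯ + ē_{2n-1}`; `ψ` composed with the quotient map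
`t^⊥ → W = t^⊥/span(t)` is the identification of `M` with `W` used to realize the
isometries of `W` as the matrix group `Sp_{2g}(ℤ/2ℤ)`. -/
def PsiMat (g : ℕ) : Matrix (Fin (2*g+2)) (Fin (2*g)) (ZMod 2) :=
  Matrix.of fun k j =>
    if (j : ℕ) % 2 = 0 then (if (k : ℕ) < (j : ℕ) + 2 then 1 else 0)
    else (if (k : ℕ) < (j : ℕ) ∨ (k : ℕ) = (j : ℕ) + 1 then 1 else 0)

/-- The permutation matrix of `σ`, acting on coordinates of `V`: `(P_σ v) k = v (σ⁻¹ k)`. -/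
def permMat (g : ℕ) (σ : Equiv.Perm (Fin (2*g+2))) :
    Matrix (Fin (2*g+2)) (Fin (2*g+2)) (ZMod 2) :=
  Matrix.of fun k j => if σ j = k then 1 else 0

/-- `A ∈ Sp_{2g}(ℤ/2ℤ)` is the matrix (w.r.t. the symplectic basis carried by `ψ`) of the
action of the permutation `σ ∈ S_{2g+2}` on `W = t^⊥/span(t)`: this says that each column of
`Ψ·A − P_σ·Ψ` lies in `span(t)`, i.e. `ψ(A·m) ≡ σ·ψ(m) mod t` for every `m ∈ M`.
The embedded copy of `S_{2g+2}` inside `Sp_{2g}(ℤ/2ℤ)` is the set of matrices representing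
some permutation in this sense. -/
def representsPerm (g : ℕ) (A : Matrix (Fin (2*g)) (Fin (2*g)) (ZMod 2))
    (σ : Equiv.Perm (Fin (2*g+2))) : Prop :=
  ∀ j, (fun k => (PsiMat g * A - permMat g σ * PsiMat g) k j) ∈ tline g

/-- Entrywise reduction `GL_6(ℤ/8ℤ) → GL_6(ℤ/2ℤ)`. -/
def red82 : GL (Fin (2*3)) (ZMod (2^3)) →* GL (Fin (2*3)) (ZMod 2) :=
  Units.map ((ZMod.castHom (show (2:ℕ) ∣ 2^3 by norm_num) (ZMod 2)).mapMatrix.toMonoidHom)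

/-- `S̃_8(8) ⊆ Sp_6(ℤ/8ℤ)`: the full preimage of the embedded copy of `S_8 ⊆ Sp_6(ℤ/2ℤ)`
under the reduction `Sp_6(ℤ/8ℤ) → Sp_6(ℤ/2ℤ)`, as a set. -/
def StildeMod8Set : Set (GL (Fin (2*3)) (ZMod (2^3))) :=
  {x | x ∈ SpSet 3 (ZMod (2^3)) ∧ ∃ σ : Equiv.Perm (Fin (2*3+2)),
    representsPerm 3 ((red82 x : GL (Fin (2*3)) (ZMod 2))
      : Matrix (Fin (2*3)) (Fin (2*3)) (ZMod 2)) σ}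

/-!
An element of `Sp_{2g}(ℤ/2ⁿ⁺¹)` congruent to `1` modulo `2ⁱ⁺¹` has the form `1 + 2ⁱ⁺¹ a`, where `a`
modulo `2` lies in the Lie algebra of `Sp_{2g}` over `𝔽₂`: the `a` with `ω(a x, y) = ω(x, a y)`,
as `-1 = 1`. So it suffices that every layer of the congruence filtration of `G` is the whole Lie
algebra. If `a² = 0` modulo `2`, then squaring moves `a` to the next layer; this applies to the
infinitesimal transvections `x ↦ ω(v, x) v`, which span, so only the first layer `S` matters.

The adjacent transpositions of `S_{2g+2}` act as the transvections in the vectors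
`v_k = e_k + e_{k+1}`, and `S` is stable under conjugation by them. Squaring an element of `G` that
lifts the transvection in `v_0`, or taking its commutator with lifts of the commuting transvections
in `v_2, v_4, …, v_{2g}`, gives elements of `S`. Because `v_0 = v_2 + v_4 + ⋯ + v_{2g}` modulo `t`,
they cannot all satisfy `ω(x, m x) = 0` for every `x`, hence some `m ∈ S` has `ω(v_0, m v_0) = 1`;
the conjugates of `m` generate the Lie algebra.
-/

open LinearMap (BilinForm)

section RankOne

/-- The endomorphism `x ↦ ω(u, x) v` of rank at most one, as a bilinear function of `(u, v)`; the
elements `rankOne ω v v` are the infinitesimal transvections. -/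
def rankOne {R V : Type*} [CommRing R] [AddCommGroup V] [Module R V] (ω : BilinForm R V) :
    V →ₗ[R] V →ₗ[R] Module.End R V :=
  LinearMap.smulRightₗ ∘ₗ ω

@[simp]
lemma rankOne_apply {R V : Type*} [CommRing R] [AddCommGroup V] [Module R V] (ω : BilinForm R V)
    (u v x : V) : rankOne ω u v x = ω u x • v :=
  rfl

lemma sum_sum_mem_of_add_swap_mem {ι M : Type*} [AddCommGroup M] {S : AddSubgroup M}
    {F : ι → ι → M} (diag : ∀ i, F i i ∈ S) (swap : ∀ i j, F i j + F j i ∈ S) (s : Finset ι) :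
    ∑ i ∈ s, ∑ j ∈ s, F i j ∈ S := by
  classical
  induction s using Finset.induction_on with
  | empty => simp
  | insert a s ha ih =>
    have split : ∑ i ∈ insert a s, ∑ j ∈ insert a s, F i j =
        F a a + ∑ j ∈ s, (F a j + F j a) + ∑ i ∈ s, ∑ j ∈ s, F i j := by
      simp only [Finset.sum_insert ha, Finset.sum_add_distrib]
      abel
    rw [split]
    exact S.add_mem (S.add_mem (diag a) (S.sum_mem fun j _ ↦ swap a j)) ih

lemma eq_sum_rankOne_of_isSelfAdjoint {ι K V : Type*} [Field K] [AddCommGroup V] [Module K V]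
    [Fintype ι] [DecidableEq ι] {ω : BilinForm K V} (hω : ω.Nondegenerate) (hsymm : ω.IsSymm)
    (b : Module.Basis ι K V) {A : Module.End K V} (hA : ω.IsSelfAdjoint A) :
    A = ∑ i, ∑ j, ω (A (b i)) (b j) • rankOne ω (ω.dualBasis hω b j) (ω.dualBasis hω b i) := by
  have expand (x : V) : x = ∑ i, ω x (b i) • ω.dualBasis hω b i := by
    simpa only [BilinForm.dualBasis_repr_apply] using ((ω.dualBasis hω b).sum_repr x).symm
  ext y
  have coeff (i : ι) :
      ω (A y) (b i) = ∑ j, ω (A (b i)) (b j) * ω (ω.dualBasis hω b j) y := by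
    rw [hA, hsymm.eq]
    conv_lhs => rw [expand (A (b i))]
    simp only [map_sum, map_smul, LinearMap.sum_apply, LinearMap.smul_apply, smul_eq_mul]
  rw [expand (A y)]
  simp only [coeff, Finset.sum_smul, mul_smul, LinearMap.sum_apply, LinearMap.smul_apply,
    rankOne_apply]

lemma selfAdjointSubmodule_le_of_rankOne_mem {K V : Type*} [Field K] [AddCommGroup V] [Module K V]
    [FiniteDimensional K V] {ω : BilinForm K V} (hω : ω.Nondegenerate) (hsymm : ω.IsSymm)
    {S : Submodule K (Module.End K V)} (mem : ∀ x, rankOne ω x x ∈ S) :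
    ω.selfAdjointSubmodule ≤ S := by
  classical
  intro A hA
  rw [eq_sum_rankOne_of_isSelfAdjoint hω hsymm (Module.finBasis K V) hA]
  have swap (x y : V) : rankOne ω x y + rankOne ω y x ∈ S := by
    convert S.sub_mem (S.sub_mem (mem (x + y)) (mem x)) (mem y) using 1
    simp only [map_add, LinearMap.add_apply]
    abel
  refine sum_sum_mem_of_add_swap_mem (S := S.toAddSubgroup) (fun i ↦ ?_) (fun i j ↦ ?_) _
  · exact S.smul_mem _ (mem _)
  · rw [hA, hsymm.eq, ← smul_add]
    exact S.smul_mem _ (swap _ _)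

lemma isSelfAdjoint_rankOne_self {R V : Type*} [CommRing R] [AddCommGroup V] [Module R V]
    {ω : BilinForm R V} (hsymm : ω.IsSymm) (v : V) : ω.IsSelfAdjoint (rankOne ω v v) := fun x y ↦ by
  rw [rankOne_apply, rankOne_apply, map_smul, map_smul, LinearMap.smul_apply, smul_eq_mul,
    smul_eq_mul, hsymm.eq x v, mul_comm]

lemma rankOne_mul_self {R V : Type*} [CommRing R] [AddCommGroup V] [Module R V]
    {ω : BilinForm R V} (hω : ω.IsAlt) (v : V) : rankOne ω v v * rankOne ω v v = 0 :=
  LinearMap.ext fun x ↦ by simp [hω.self_eq_zero]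

end RankOne

section CharTwo

variable {V : Type*} [AddCommGroup V] [Module (ZMod 2) V] {ω : BilinForm (ZMod 2) V}

lemma comm_of_isAlt (hω : ω.IsAlt) (u v : V) : ω u v = ω v u := by
  rw [← hω.neg_eq, ZModModule.neg_eq_self]

lemma eq_one_of_ne_zero {a : ZMod 2} (ha : a ≠ 0) : a = 1 :=
  Fin.eq_one_of_ne_zero a ha

/-- The symplectic transvection `x ↦ x + ω(v, x) v`. -/
def sympTransvection (ω : BilinForm (ZMod 2) V) (v : V) : Module.End (ZMod 2) V :=
  LinearMap.transvection (ω v) v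

lemma sympTransvection_apply (v x : V) : sympTransvection ω v x = x + ω v x • v :=
  LinearMap.transvection.apply _ _ _

lemma sympTransvection_eq_one_add (v : V) : sympTransvection ω v = 1 + rankOne ω v v :=
  LinearMap.ext fun _ ↦ sympTransvection_apply v _

lemma sympTransvection_mul_self (hω : ω.IsAlt) (v : V) :
    sympTransvection ω v * sympTransvection ω v = 1 := by
  rw [sympTransvection, Module.End.mul_eq_comp,
    LinearMap.transvection.comp_of_left_eq (hω.self_eq_zero v), ZModModule.add_self,
    LinearMap.transvection.of_right_eq_zero, Module.End.one_eq_id]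

lemma sympTransvection_sympTransvection (hω : ω.IsAlt) (v x : V) :
    sympTransvection ω v (sympTransvection ω v x) = x :=
  LinearMap.congr_fun (sympTransvection_mul_self hω v) x

lemma isSelfAdjoint_sympTransvection (hω : ω.IsAlt) (v : V) :
    ω.IsSelfAdjoint (sympTransvection ω v) := fun x y ↦ by
  simp only [sympTransvection_apply, map_add, map_smul, LinearMap.add_apply, LinearMap.smul_apply,
    smul_eq_mul, comm_of_isAlt hω x v]
  ring

lemma sympTransvection_conj_rankOne (hω : ω.IsAlt) (z u v : V) :
    sympTransvection ω z * rankOne ω u v * sympTransvection ω z =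
      rankOne ω (sympTransvection ω z u) (sympTransvection ω z v) := by
  ext x
  simp only [Module.End.mul_apply, rankOne_apply, map_smul,
    ← isSelfAdjoint_sympTransvection hω z u x]

/-- The linear map `y ↦ ω(z, ·) y + ω(y, ·) z + ω(z, y) ω(z, ·) z`. For `τ` the transvection in `z`
and `A` self-adjoint it sends `A z` to `A + τ A τ`, which thus depends on `A` through `A z` only. -/
def conjDefect (ω : BilinForm (ZMod 2) V) (z : V) : V →ₗ[ZMod 2] Module.End (ZMod 2) V :=
  rankOne ω z + (rankOne ω).flip z + (ω z).smulRight (rankOne ω z z)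

lemma conjDefect_apply (z y : V) :
    conjDefect ω z y = rankOne ω z y + rankOne ω y z + ω z y • rankOne ω z z :=
  rfl

lemma add_sympTransvection_conj (z : V) {A : Module.End (ZMod 2) V}
    (hA : ω.IsSelfAdjoint A) :
    A + sympTransvection ω z * A * sympTransvection ω z = conjDefect ω z (A z) := by
  ext x
  have hzx : ω z (A x) = ω (A z) x := (hA z x).symm
  simp only [LinearMap.add_apply, Module.End.mul_apply, sympTransvection_apply, map_add, map_smul,
    conjDefect_apply, LinearMap.smul_apply, rankOne_apply, hzx, smul_add]
  rw [← add_assoc, ← add_assoc, ← add_assoc, ZModModule.add_self]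
  module

lemma sympTransvection_conj_conjDefect (hω : ω.IsAlt) (u z y : V) :
    sympTransvection ω u * conjDefect ω z y * sympTransvection ω u =
      conjDefect ω (sympTransvection ω u z) (sympTransvection ω u y) := by
  have isometry : ω (sympTransvection ω u z) (sympTransvection ω u y) = ω z y := by
    rw [isSelfAdjoint_sympTransvection hω, sympTransvection_sympTransvection hω]
  simp only [conjDefect_apply, mul_add, add_mul, mul_smul_comm, smul_mul_assoc,
    sympTransvection_conj_rankOne hω, isometry]

lemma apply_rankOne_self_apply (hω : ω.IsAlt) (z x : V) : ω x (rankOne ω z z x) = ω z x := by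
  rw [rankOne_apply, map_smul, comm_of_isAlt hω x, smul_eq_mul, ← sq, ZMod.pow_card]

lemma apply_conjDefect_apply (hω : ω.IsAlt) (z y x : V) :
    ω x (conjDefect ω z y x) = ω z y * ω z x := by
  simp only [conjDefect_apply, LinearMap.add_apply, LinearMap.smul_apply, map_add, map_smul,
    apply_rankOne_self_apply hω, smul_eq_mul]
  rw [rankOne_apply, rankOne_apply, map_smul, map_smul, comm_of_isAlt hω x z,
    comm_of_isAlt hω x y, smul_eq_mul, smul_eq_mul, mul_comm, ZModModule.add_self, zero_add]

/-- The map `x ↦ ω(x, A x)` for a self-adjoint `A` is additive, because the polarization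
`ω(x, A y) + ω(y, A x)` is `2 ω(x, A y) = 0`. -/
def diagHom (hω : ω.IsAlt) {A : Module.End (ZMod 2) V} (hA : ω.IsSelfAdjoint A) : V →+ ZMod 2 :=
  AddMonoidHom.mk' (fun x ↦ ω x (A x)) fun x y ↦ by
    have cross : ω y (A x) = ω x (A y) := by rw [← hA, comm_of_isAlt hω]
    simp only [map_add, LinearMap.add_apply, cross]
    linear_combination ZModModule.add_self (ω x (A y))

@[simp]
lemma diagHom_apply (hω : ω.IsAlt) {A : Module.End (ZMod 2) V} (hA : ω.IsSelfAdjoint A) (x : V) :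
    diagHom hω hA x = ω x (A x) :=
  rfl

end CharTwo

section Chain

variable {V : Type*} [AddCommGroup V] [Module (ZMod 2) V] {ω : BilinForm (ZMod 2) V}

/-- Vectors `v 0, …, v (2g)` spanning `V` whose transvections satisfy the relations of the adjacent
transpositions `(k, k+1)` of `S_{2g+2}`: they model the classes of `e_k + e_{k+1}` in
`t^⊥ / span(t)`, the sum of the even-indexed ones being the class of `t`. -/
structure IsTransvectionChain (ω : BilinForm (ZMod 2) V) (g : ℕ) (v : ℕ → V) : Prop where
  apply_succ : ∀ k < 2 * g, ω (v k) (v (k + 1)) = 1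
  apply_of_lt : ∀ j k, j + 1 < k → k ≤ 2 * g → ω (v j) (v k) = 0
  sum_even : ∑ i ∈ Finset.range (g + 1), v (2 * i) = 0
  span_eq_top : Submodule.span (ZMod 2) (v '' Set.Iic (2 * g)) = ⊤

namespace IsTransvectionChain

variable {g : ℕ} {v : ℕ → V}

lemma zero_eq_sum (hv : IsTransvectionChain ω g v) :
    v 0 = ∑ i ∈ Finset.range g, v (2 * (i + 1)) := by
  have h := hv.sum_even
  rw [Finset.sum_range_succ', ← ZModModule.sub_eq_add, sub_eq_zero] at h
  exact h.symm

lemma sympTransvection_comp_succ (hω : ω.IsAlt) (hv : IsTransvectionChain ω g v) {k : ℕ}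
    (hk : k < 2 * g) :
    sympTransvection ω (v k) (sympTransvection ω (v (k + 1)) (v k)) = v (k + 1) := by
  have h := hv.apply_succ k hk
  rw [sympTransvection_apply, sympTransvection_apply, comm_of_isAlt hω, h, one_smul, map_add,
    hω.self_eq_zero, h, zero_add, one_smul, add_right_comm, ZModModule.add_self, zero_add]

lemma forall_of_stable (hω : ω.IsAlt) (hv : IsTransvectionChain ω g v) {P : V → Prop}
    (stable : ∀ k ≤ 2 * g, ∀ x, P x → P (sympTransvection ω (v k) x)) (zero : P (v 0)) :
    ∀ k ≤ 2 * g, P (v k) := by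
  intro k
  induction k with
  | zero => exact fun _ ↦ zero
  | succ k ih =>
    intro hk
    rw [← hv.sympTransvection_comp_succ hω hk]
    exact stable k (by lia) _ (stable (k + 1) hk _ (ih (by lia)))

lemma span_induction (hv : IsTransvectionChain ω g v) {W : Submodule (ZMod 2) V}
    (mem : ∀ k ≤ 2 * g, v k ∈ W) : W = ⊤ := by
  rw [eq_top_iff, ← hv.span_eq_top, Submodule.span_le]
  rintro _ ⟨k, hk, rfl⟩
  exact mem k hk

lemma sympTransvection_zero (hω : ω.IsAlt) (hv : IsTransvectionChain ω g v) {k : ℕ} (hk : 2 ≤ k)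
    (hkg : k ≤ 2 * g) : sympTransvection ω (v k) (v 0) = v 0 := by
  rw [sympTransvection_apply, comm_of_isAlt hω, hv.apply_of_lt 0 k hk hkg, zero_smul, add_zero]

section Stable

variable {W : Submodule (ZMod 2) V}
  (stable : ∀ k, 2 ≤ k → k ≤ 2 * g → ∀ x ∈ W, sympTransvection ω (v k) x ∈ W)

include stable

lemma mem_of_apply_eq_one {k : ℕ} (hk : 2 ≤ k) (hkg : k ≤ 2 * g) {x : V} (hx : x ∈ W)
    (h : ω (v k) x = 1) : v k ∈ W := by
  have key : v k = sympTransvection ω (v k) x - x := by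
    rw [sympTransvection_apply, h, one_smul, add_sub_cancel_left]
  rw [key]
  exact W.sub_mem (stable k hk hkg x hx) hx

lemma mem_of_mem (hω : ω.IsAlt) (hv : IsTransvectionChain ω g v) {i : ℕ} (hi : 2 ≤ i)
    (hig : i ≤ 2 * g) (mem : v i ∈ W) {k : ℕ} (hk : 2 ≤ k) (hkg : k ≤ 2 * g) : v k ∈ W := by
  obtain hik | hki := le_total i k
  · induction k, hik using Nat.le_induction with
    | base => exact mem
    | succ k hik ih =>
      refine mem_of_apply_eq_one stable hk hkg (ih (by lia) (by lia)) ?_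
      rw [comm_of_isAlt hω, hv.apply_succ k hkg]
  · induction i, hki using Nat.le_induction with
    | base => exact mem
    | succ i hki ih =>
      refine ih (by lia) (by lia) (mem_of_apply_eq_one stable (by lia) (by lia) mem ?_)
      exact hv.apply_succ i hig

/-- Pairing with `v 0 = v 2 + v 4 + ⋯ + v (2g)`, the vector `y` produces one of the `v (2i)`, hence
all `v k` with `k ≥ 2`; as only `v 1` pairs with `v 0`, it then also produces `v 1`. -/
lemma eq_top_of_stable (hω : ω.IsAlt) (hv : IsTransvectionChain ω g v) (zero : v 0 ∈ W) {y : V}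
    (hy : y ∈ W) (hzy : ω (v 0) y = 1) : W = ⊤ := by
  have exists_even : ∃ i ∈ Finset.range g, ω (v (2 * (i + 1))) y ≠ 0 := by
    refine Finset.exists_ne_zero_of_sum_ne_zero ?_
    rw [← LinearMap.sum_apply, ← map_sum, ← hv.zero_eq_sum, hzy]
    exact one_ne_zero
  obtain ⟨i, hi, hiy⟩ := exists_even
  have hig : i < g := Finset.mem_range.1 hi
  have mem_of_two_le : ∀ k, 2 ≤ k → k ≤ 2 * g → v k ∈ W := fun k ↦
    mem_of_mem stable hω hv (i := 2 * (i + 1)) (by lia) (by lia)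
      (mem_of_apply_eq_one stable (by lia) (by lia) hy (eq_one_of_ne_zero hiy))
  have sub_mem : W.comap (LinearMap.id - (ω (v 0)).smulRight (v 1)) = ⊤ := by
    refine hv.span_induction fun k hk ↦ ?_
    change v k - ω (v 0) (v k) • v 1 ∈ W
    match k with
    | 0 => simpa [hω.self_eq_zero] using zero
    | 1 => simp [hv.apply_succ 0 hk]
    | k + 2 =>
      rw [hv.apply_of_lt 0 (k + 2) (by lia) hk, zero_smul, sub_zero]
      exact mem_of_two_le _ (by lia) hk
  have one : v 1 ∈ W := by
    have h : y - ω (v 0) y • v 1 ∈ W := sub_mem.ge (Submodule.mem_top (x := y))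
    rw [hzy, one_smul] at h
    exact (W.sub_mem_iff_right hy).1 h
  refine hv.span_induction fun k hk ↦ ?_
  match k with
  | 0 => exact zero
  | 1 => exact one
  | k + 2 => exact mem_of_two_le _ (by lia) hk

end Stable

section ConjStable

variable {S : Submodule (ZMod 2) (Module.End (ZMod 2) V)}
  (conj : ∀ k ≤ 2 * g, ∀ m ∈ S, sympTransvection ω (v k) * m * sympTransvection ω (v k) ∈ S)

include conj

lemma diag_eq_zero_of_conj (hω : ω.IsAlt) (hv : IsTransvectionChain ω g v)
    (hS : S ≤ ω.selfAdjointSubmodule) (zero : ∀ m ∈ S, ω (v 0) (m (v 0)) = 0) :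
    ∀ m ∈ S, ∀ x, ω x (m x) = 0 := by
  have diag_chain : ∀ k ≤ 2 * g, ∀ m ∈ S, ω (v k) (m (v k)) = 0 := by
    refine hv.forall_of_stable hω (P := fun x ↦ ∀ m ∈ S, ω x (m x) = 0)
      (fun k hk x hx m hm ↦ ?_) zero
    rw [isSelfAdjoint_sympTransvection hω]
    exact hx _ (conj k hk m hm)
  intro m hm
  let q : V →ₗ[ZMod 2] ZMod 2 := (diagHom hω (hS hm)).toZModLinearMap 2
  have ker_q : LinearMap.ker q = ⊤ := hv.span_induction fun k hk ↦ diag_chain k hk m hm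
  exact fun x ↦ LinearMap.congr_fun (LinearMap.ker_eq_top.1 ker_q) x

lemma conjDefect_mem (hω : ω.IsAlt) (hv : IsTransvectionChain ω g v)
    (hS : S ≤ ω.selfAdjointSubmodule) {m : Module.End (ZMod 2) V} (hm : m ∈ S)
    (hzm : ω (v 0) (m (v 0)) = 1) (y : V) : conjDefect ω (v 0) y ∈ S := by
  have comap_eq_top : S.comap (conjDefect ω (v 0)) = ⊤ := by
    refine eq_top_of_stable (fun k hk hkg x hx ↦ ?_) hω hv ?_ (y := m (v 0)) ?_ hzm
    · have h := conj k hkg _ hx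
      rwa [sympTransvection_conj_conjDefect hω, hv.sympTransvection_zero hω hk hkg] at h
    · rw [Submodule.mem_comap, conjDefect_apply, hω.self_eq_zero, ZModModule.add_self, zero_smul,
        add_zero]
      exact S.zero_mem
    · rw [Submodule.mem_comap, ← add_sympTransvection_conj (v 0) (hS hm)]
      exact S.add_mem hm (conj 0 (Nat.zero_le _) m hm)
  exact comap_eq_top.ge (Submodule.mem_top (x := y))

lemma rankOne_mem (hω : ω.IsAlt) (hv : IsTransvectionChain ω g v)
    (self : rankOne ω (v 0) (v 0) ∈ S)
    (swap : ∀ y, rankOne ω (v 0) y + rankOne ω y (v 0) ∈ S) (x : V) :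
    rankOne ω x x ∈ S ∧ ∀ y, rankOne ω x y + rankOne ω y x ∈ S := by
  have chain : ∀ k ≤ 2 * g,
      rankOne ω (v k) (v k) ∈ S ∧ ∀ y, rankOne ω (v k) y + rankOne ω y (v k) ∈ S := by
    refine hv.forall_of_stable hω
      (P := fun x ↦ rankOne ω x x ∈ S ∧ ∀ y, rankOne ω x y + rankOne ω y x ∈ S)
      (fun k hk x hx ↦ ⟨?_, fun y ↦ ?_⟩) ⟨self, swap⟩
    · rw [← sympTransvection_conj_rankOne hω]
      exact conj k hk _ hx.1
    · have h := conj k hk _ (hx.2 (sympTransvection ω (v k) y))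
      rwa [mul_add, add_mul, sympTransvection_conj_rankOne hω, sympTransvection_conj_rankOne hω,
        sympTransvection_sympTransvection hω] at h
  have mem_span : x ∈ Submodule.span (ZMod 2) (v '' Set.Iic (2 * g)) :=
    hv.span_eq_top.ge Submodule.mem_top
  induction mem_span using Submodule.span_induction with
  | mem x hx =>
    obtain ⟨k, hk, rfl⟩ := hx
    exact chain k hk
  | zero => simp
  | add x y _ _ hx hy =>
    refine ⟨?_, fun w ↦ ?_⟩
    · convert S.add_mem (S.add_mem hx.1 hy.1) (hx.2 y) using 1
      simp only [map_add, LinearMap.add_apply]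
      abel
    · convert S.add_mem (hx.2 w) (hy.2 w) using 1
      simp only [map_add, LinearMap.add_apply]
      abel
  | smul c x _ hx =>
    refine ⟨?_, fun w ↦ ?_⟩
    · simpa only [map_smul, LinearMap.smul_apply] using S.smul_mem c (S.smul_mem c hx.1)
    · simpa only [map_smul, LinearMap.smul_apply, smul_add] using S.smul_mem c (hx.2 w)

/-- If `ω(x, m x)` vanished for all `m ∈ S`, then `square` at `x = v 1` would give
`ω(v 0, A (v 0)) = 1`, and `commutator` at a neighbour `x` of `v (2i)` orthogonal to `v 0` would
give `ω(v (2i), A (v (2i))) = 0`; this contradicts additivity and `v 0 = v 2 + ⋯ + v (2g)`. -/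
lemma exists_diag_eq_one (hω : ω.IsAlt) (hv : IsTransvectionChain ω g v) (hg : 2 ≤ g)
    (hS : S ≤ ω.selfAdjointSubmodule) {A : Module.End (ZMod 2) V} (hA : ω.IsSelfAdjoint A)
    (square : rankOne ω (v 0) (v 0) + conjDefect ω (v 0) (A (v 0)) ∈ S)
    (commutator : ∀ i < g, ∃ y,
      conjDefect ω (v (2 * (i + 1))) (A (v (2 * (i + 1)))) + conjDefect ω (v 0) y ∈ S) :
    ∃ m ∈ S, ω (v 0) (m (v 0)) = 1 := by
  by_contra! h
  have diag : ∀ m ∈ S, ∀ x, ω x (m x) = 0 :=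
    diag_eq_zero_of_conj conj hω hv hS fun m hm ↦ of_not_not fun hne ↦
      h m hm (eq_one_of_ne_zero hne)
  have diag_even : ∀ i ∈ Finset.range g, diagHom hω hA (v (2 * (i + 1))) = 0 := by
    intro i hi
    have hig : i < g := Finset.mem_range.1 hi
    obtain ⟨x, hx, hx0⟩ : ∃ x, ω (v (2 * (i + 1))) x = 1 ∧ ω (v 0) x = 0 := by
      obtain rfl | hi0 := Nat.eq_zero_or_pos i
      · exact ⟨v 3, hv.apply_succ 2 (by lia), hv.apply_of_lt 0 3 (by lia) (by lia)⟩
      · refine ⟨v (2 * i + 1), ?_, hv.apply_of_lt 0 _ (by lia) (by lia)⟩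
        rw [comm_of_isAlt hω]
        exact hv.apply_succ (2 * i + 1) (by lia)
    obtain ⟨y, hy⟩ := commutator i hig
    have h0 := diag _ hy x
    rwa [LinearMap.add_apply, map_add, apply_conjDefect_apply hω, apply_conjDefect_apply hω, hx,
      hx0, mul_one, mul_zero, add_zero] at h0
  have diag_zero : diagHom hω hA (v 0) = 0 := by
    rw [hv.zero_eq_sum, map_sum, Finset.sum_eq_zero diag_even]
  have h1 := diag _ square (v 1)
  rw [LinearMap.add_apply, map_add, apply_rankOne_self_apply hω, apply_conjDefect_apply hω,
    hv.apply_succ 0 (by lia), ← diagHom_apply hω hA, diag_zero, zero_mul, add_zero] at h1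
  exact one_ne_zero h1

theorem selfAdjointSubmodule_le [FiniteDimensional (ZMod 2) V] (hnd : ω.Nondegenerate)
    (hω : ω.IsAlt) (hv : IsTransvectionChain ω g v) (hg : 2 ≤ g)
    (hS : S ≤ ω.selfAdjointSubmodule) {A : Module.End (ZMod 2) V} (hA : ω.IsSelfAdjoint A)
    (square : rankOne ω (v 0) (v 0) + conjDefect ω (v 0) (A (v 0)) ∈ S)
    (commutator : ∀ i < g, ∃ y,
      conjDefect ω (v (2 * (i + 1))) (A (v (2 * (i + 1)))) + conjDefect ω (v 0) y ∈ S) :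
    ω.selfAdjointSubmodule ≤ S := by
  obtain ⟨m, hm, hzm⟩ := exists_diag_eq_one conj hω hv hg hS hA square commutator
  have defect := conjDefect_mem conj hω hv hS hm hzm
  have self : rankOne ω (v 0) (v 0) ∈ S := (S.add_mem_iff_left (defect _)).1 square
  have swap (y : V) : rankOne ω (v 0) y + rankOne ω y (v 0) ∈ S :=
    (S.add_mem_iff_left (S.smul_mem _ self)).1 (defect y)
  exact selfAdjointSubmodule_le_of_rankOne_mem hnd ⟨comm_of_isAlt hω⟩ fun x ↦
    (rankOne_mem conj hω hv self swap x).1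

end ConjStable

end IsTransvectionChain

end Chain

section CongruenceFiltration

lemma map_inv_of_mul_self_eq_one {M E F : Type*} [Monoid M] [Monoid E] [FunLike F M E]
    [MonoidHomClass F M E] (ρ : F) {x : Mˣ} {e : E} (hxe : ρ x = e) (hee : e * e = 1) :
    ρ (x⁻¹ : Mˣ) = e := by
  refine left_inv_eq_right_inv ?_ hee
  rw [← hxe, ← map_mul, Units.inv_mul, map_one]

variable {M E : Type*} [Ring M] [Ring E] [Algebra (ZMod 2) E] (ρ : M →+* E) (G H : Subgroup Mˣ)

lemma map_two_pow_nsmul (i : ℕ) (a : M) : ρ (2 ^ (i + 1) • a) = 0 := by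
  rw [map_nsmul, pow_succ, mul_smul, two_nsmul, ZModModule.add_self, nsmul_zero]

lemma map_two_nsmul (a : M) : ρ (2 • a) = 0 :=
  map_two_pow_nsmul ρ 0 a

/-- The `i`-th layer of the congruence filtration of `G`, for `ρ` a reduction modulo `2`: the
elements `ρ a` such that `1 + 2 ^ (i + 1) a` lies in `G`. -/
def congruenceLayer (i : ℕ) : Submodule (ZMod 2) E :=
  AddSubgroup.toZModSubmodule 2
    { carrier := {e | ∃ x ∈ G, ∃ a, (x : M) = 1 + 2 ^ (i + 1) • a ∧ ρ a = e}
      zero_mem' := ⟨1, G.one_mem, 0, by simp, map_zero ρ⟩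
      add_mem' := by
        rintro _ _ ⟨x, hx, a, hxa, rfl⟩ ⟨y, hy, b, hyb, rfl⟩
        refine ⟨x * y, G.mul_mem hx hy, a + b + 2 ^ (i + 1) • (a * b), ?_, ?_⟩
        · rw [Units.val_mul, hxa, hyb]
          simp only [mul_add, add_mul, smul_add, one_mul, mul_one, smul_mul_assoc, mul_smul_comm]
          abel
        · rw [map_add, map_add, map_two_pow_nsmul, add_zero]
      neg_mem' := fun he ↦ by rwa [ZModModule.neg_eq_self] }

variable {ρ G H}

lemma mem_congruenceLayer_zero {x : Mˣ} (hx : x ∈ G) {a : M} (hxa : (x : M) = 1 + 2 • a) :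
    ρ a ∈ congruenceLayer ρ G 0 :=
  ⟨x, hx, a, by simpa using hxa, rfl⟩

lemma conj_mem_congruenceLayer {i : ℕ} {e : E} {x : Mˣ} (hx : x ∈ G)
    (he : e ∈ congruenceLayer ρ G i) :
    ρ x * e * ρ (x⁻¹ : Mˣ) ∈ congruenceLayer ρ G i := by
  obtain ⟨y, hy, a, hya, rfl⟩ := he
  refine ⟨x * y * x⁻¹, G.mul_mem (G.mul_mem hx hy) (G.inv_mem hx), x * a * (x⁻¹ : Mˣ), ?_, ?_⟩
  · rw [Units.val_mul, Units.val_mul, hya, mul_add, mul_one, add_mul, Units.mul_inv,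
      mul_smul_comm, smul_mul_assoc]
  · rw [map_mul, map_mul]

lemma mem_congruenceLayer_succ {i : ℕ} {e : E} (he : e ∈ congruenceLayer ρ G i)
    (hee : e * e = 0) : e ∈ congruenceLayer ρ G (i + 1) := by
  obtain ⟨x, hx, a, hxa, rfl⟩ := he
  refine ⟨x * x, G.mul_mem hx hx, a + 2 ^ i • (a * a), ?_, ?_⟩
  · rw [Units.val_mul, hxa]
    simp only [mul_add, add_mul, smul_add, one_mul, mul_one, smul_mul_assoc, mul_smul_comm,
      smul_smul]
    rw [← pow_add, ← pow_add, pow_succ 2 (i + 1), mul_two, add_smul,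
      show i + 1 + (i + 1) = i + 1 + 1 + i by ring]
    abel
  · rw [map_add, map_nsmul, map_mul, hee, nsmul_zero, add_zero]

lemma add_conj_mem_of_square {x : Mˣ} (hx : x ∈ G) {N a : M} (hN : N * N = 0)
    (hxa : (x : M) = (1 + N) * (1 + 2 • a)) :
    ρ N + (ρ a + ρ (1 + N) * ρ a * ρ (1 + N)) ∈ congruenceLayer ρ G 0 := by
  set t := 1 + N with ht
  have htt : t * t = 1 + 2 • N := by
    rw [ht]
    linear_combination (norm := noncomm_ring) hN
  have hsq : ((x * x : Mˣ) : M) = 1 + 2 • (N + (a + t * a * t) + 2 • (N * a + t * a * t * a)) := by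
    calc ((x * x : Mˣ) : M) = t * t * (1 + 2 • a) + 2 • (t * a * t) + 4 • (t * a * t * a) := by
          rw [Units.val_mul, hxa]
          noncomm_ring
      _ = _ := by
          rw [htt]
          noncomm_ring
  have h := mem_congruenceLayer_zero (ρ := ρ) (G.mul_mem hx hx) hsq
  rwa [map_add, map_two_nsmul, add_zero, map_add, map_add, map_mul, map_mul] at h

lemma add_conj_mem_of_commutator {x y : Mˣ} (hx : x ∈ G) (hy : y ∈ G) {s t a b : M}
    (hst : Commute s t) (hs : ρ s * ρ s = 1) (ht : ρ t * ρ t = 1)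
    (hxa : (x : M) = s * (1 + 2 • a)) (hyb : (y : M) = t * (1 + 2 • b)) :
    (ρ a + ρ t * ρ a * ρ t) + (ρ b + ρ s * ρ b * ρ s) ∈ congruenceLayer ρ G 0 := by
  have hst' : ρ t * ρ s = ρ s * ρ t := (hst.map ρ).eq.symm
  set d := s * a * t + s * t * b - t * b * s - t * s * a +
    2 • (s * a * t * b - t * b * s * a) with hd
  have swap : (x * y : M) = y * x + 2 • d := by
    rw [hxa, hyb, hd, ← sub_eq_iff_eq_add']
    have : s * t - t * s = 0 := sub_eq_zero.2 hst
    linear_combination (norm := noncomm_ring) this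
  have hcomm : ((x⁻¹ * y⁻¹ * (x * y) : Mˣ) : M) =
      1 + 2 • ((x⁻¹ : Mˣ) * (y⁻¹ : Mˣ) * d) := by
    rw [Units.val_mul, Units.val_mul x, swap, mul_add, mul_smul_comm, ← Units.val_mul y,
      ← _root_.mul_inv_rev, Units.inv_mul, _root_.mul_inv_rev, Units.val_mul]
  have h := mem_congruenceLayer_zero (ρ := ρ)
    (G.mul_mem (G.mul_mem (G.inv_mem hx) (G.inv_mem hy)) (G.mul_mem hx hy)) hcomm
  convert h using 1
  have map_lift (r c : M) : ρ (r * (1 + 2 • c)) = ρ r := by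
    rw [mul_add, mul_one, mul_smul_comm, map_add, map_two_nsmul, add_zero]
  have hxs : ρ (x⁻¹ : Mˣ) = ρ s := map_inv_of_mul_self_eq_one ρ (hxa ▸ map_lift s a) hs
  have hyt : ρ (y⁻¹ : Mˣ) = ρ t := map_inv_of_mul_self_eq_one ρ (hyb ▸ map_lift t b) ht
  rw [map_mul, map_mul, hxs, hyt, hd, map_add, map_two_nsmul, add_zero]
  have cancel_s (c : E) : ρ s * (ρ s * c) = c := by rw [← mul_assoc, hs, one_mul]
  have cancel_t (c : E) : ρ t * (ρ t * c) = c := by rw [← mul_assoc, ht, one_mul]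
  have comm_ts (c : E) : ρ t * (ρ s * c) = ρ s * (ρ t * c) := by rw [← mul_assoc, hst', mul_assoc]
  simp only [map_sub, map_add, map_mul, ZModModule.sub_eq_add, mul_add, mul_assoc, comm_ts,
    cancel_s, cancel_t]
  abel

lemma mem_of_congruenceLayer_le (hGH : G ≤ H) (hker : ∀ a, ρ a = 0 → ∃ b, a = 2 • b) {n : ℕ}
    (hn : ∀ a : M, 2 ^ (n + 1) • a = 0)
    (layer : ∀ i < n, congruenceLayer ρ H i ≤ congruenceLayer ρ G i)
    {y : Mˣ} (hy : y ∈ H) (hρy : ρ y = 1) : y ∈ G := by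
  let Deep (i : ℕ) : Prop := ∀ y ∈ H, ∀ a, (y : M) = 1 + 2 ^ (i + 1) • a → y ∈ G
  have deep : Deep 0 := by
    refine Nat.decreasingInduction (motive := fun i _ ↦ Deep i) (fun i hi ih y hy a hya ↦ ?_)
      (fun y _ a hya ↦ ?_) (Nat.zero_le n)
    · obtain ⟨x, hx, b, hxb, hba⟩ := layer i hi ⟨y, hy, a, hya, rfl⟩
      obtain ⟨d, hd⟩ := hker (a - b) (by rw [map_sub, hba, sub_self])
      have hxy : ((x⁻¹ * y : Mˣ) : M) = 1 + 2 ^ (i + 1 + 1) • ((x⁻¹ : Mˣ) * d) := by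
        have h : (y : M) = x + 2 ^ (i + 1 + 1) • d := by
          rw [hya, hxb, add_assoc, pow_succ 2 (i + 1), mul_smul, ← hd, ← smul_add,
            add_sub_cancel]
        rw [Units.val_mul, h, mul_add, Units.inv_mul, mul_smul_comm]
      exact (G.mul_mem_cancel_left (G.inv_mem hx)).1
        (ih _ (H.mul_mem (H.inv_mem (hGH hx)) hy) _ hxy)
    · rw [hn, add_zero, Units.val_eq_one] at hya
      exact hya ▸ G.one_mem
  obtain ⟨b, hb⟩ := hker (y - 1) (by rw [map_sub, map_one, hρy, sub_self])
  exact deep y hy b (by rw [zero_add, pow_one, ← hb, add_sub_cancel])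

end CongruenceFiltration

lemma map_vecMulVec_vecMul {ι R S : Type*} [Fintype ι] [CommRing R] [CommRing S] (φ : R →+* S)
    (u v : ι → R) (J : Matrix ι ι R) :
    (vecMulVec v (u ᵥ* J)).map φ = vecMulVec (φ ∘ v) ((φ ∘ u) ᵥ* J.map φ) := by
  ext i j
  rw [map_apply, vecMulVec_apply, vecMulVec_apply, map_mul, RingHom.map_vecMul,
    Function.comp_apply]

section IsometryGroup

variable {ι R : Type*} [Fintype ι] [DecidableEq ι] [CommRing R]

/-- The isometries `S` of the bilinear form with matrix `J`, i.e. `Sᵀ J S = J`. -/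
def isometryGroup (J : Matrix ι ι R) : Subgroup (GL ι R) where
  carrier := {S | (S : Matrix ι ι R)ᵀ * J * S = J}
  one_mem' := by simp
  mul_mem' := fun {S T} (hS : _ = J) (hT : _ = J) ↦ by
    calc (S * T : Matrix ι ι R)ᵀ * J * (S * T : Matrix ι ι R)
        = (T : Matrix ι ι R)ᵀ * ((S : Matrix ι ι R)ᵀ * J * S) * T := by
          simp only [transpose_mul, Matrix.mul_assoc]
      _ = J := by rw [hS, hT]
  inv_mem' := fun {S} (hS : _ = J) ↦ by
    obtain ⟨S, T, hST, hTS⟩ := S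
    calc Tᵀ * J * T = Tᵀ * (Sᵀ * J * S) * T := by rw [hS]
      _ = (S * T)ᵀ * J * (S * T) := by simp only [transpose_mul, Matrix.mul_assoc]
      _ = J := by rw [hST, transpose_one, Matrix.one_mul, Matrix.mul_one]

lemma mem_isometryGroup {J : Matrix ι ι R} {S : GL ι R} :
    S ∈ isometryGroup J ↔ (S : Matrix ι ι R)ᵀ * J * S = J :=
  Iff.rfl

variable {J : Matrix ι ι R} (hJ : (toBilin' J).IsAlt)

include hJ

lemma transpose_eq_neg_of_isAlt : Jᵀ = -J := by
  ext i j
  have h := hJ.neg_eq (Pi.single i 1) (Pi.single j 1)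
  rw [toBilin'_single, toBilin'_single] at h
  rw [transpose_apply, neg_apply, h]

lemma vecMul_dotProduct_self_of_isAlt (v : ι → R) : (v ᵥ* J) ⬝ᵥ v = 0 := by
  rw [← dotProduct_mulVec, ← toBilin'_apply', hJ.self_eq_zero]

lemma vecMulVec_mul_self_of_isAlt (v : ι → R) :
    vecMulVec v (v ᵥ* J) * vecMulVec v (v ᵥ* J) = 0 := by
  rw [vecMulVec_mul_vecMulVec, vecMul_dotProduct_self_of_isAlt hJ, zero_smul, vecMulVec_zero]

/-- The matrix of the symplectic transvection `x ↦ x + (v ⬝ᵥ J *ᵥ x) • v`. -/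
def matTransvection (v : ι → R) : GL ι R where
  val := 1 + vecMulVec v (v ᵥ* J)
  inv := 1 - vecMulVec v (v ᵥ* J)
  val_inv := by
    linear_combination (norm := noncomm_ring) -vecMulVec_mul_self_of_isAlt hJ v
  inv_val := by
    linear_combination (norm := noncomm_ring) -vecMulVec_mul_self_of_isAlt hJ v

lemma coe_matTransvection (v : ι → R) :
    (matTransvection hJ v : Matrix ι ι R) = 1 + vecMulVec v (v ᵥ* J) :=
  rfl

lemma matTransvection_mem_isometryGroup (v : ι → R) : matTransvection hJ v ∈ isometryGroup J := by
  have mulVec_eq : J *ᵥ v = -(v ᵥ* J) := by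
    rw [← vecMul_transpose, transpose_eq_neg_of_isAlt hJ, vecMul_neg]
  have left : (vecMulVec v (v ᵥ* J))ᵀ * J = vecMulVec (v ᵥ* J) (v ᵥ* J) := by
    rw [transpose_vecMulVec, vecMulVec_mul]
  have right : J * vecMulVec v (v ᵥ* J) = -vecMulVec (v ᵥ* J) (v ᵥ* J) := by
    rw [mul_vecMulVec, mulVec_eq, neg_vecMulVec]
  have both : (vecMulVec v (v ᵥ* J))ᵀ * J * vecMulVec v (v ᵥ* J) = 0 := by
    rw [left, vecMulVec_mul_vecMulVec, vecMul_dotProduct_self_of_isAlt hJ, zero_smul,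
      vecMulVec_zero]
  rw [mem_isometryGroup, coe_matTransvection, transpose_add, transpose_one, mul_add, add_mul,
    add_mul, add_mul, both, Matrix.one_mul, Matrix.mul_one, Matrix.mul_one, left, right]
  abel

lemma commute_matTransvection {u v : ι → R} (huv : toBilin' J u v = 0) :
    Commute (matTransvection hJ u : Matrix ι ι R) (matTransvection hJ v) := by
  have hvu : toBilin' J v u = 0 := by rw [← hJ.neg_eq, huv, neg_zero]
  rw [toBilin'_apply', dotProduct_mulVec] at huv hvu
  rw [coe_matTransvection, coe_matTransvection]
  refine (Commute.one_left _).add_left ((Commute.one_right _).add_right ?_)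
  rw [Commute, SemiconjBy, vecMulVec_mul_vecMulVec, vecMulVec_mul_vecMulVec, huv, hvu, zero_smul,
    zero_smul, vecMulVec_zero, vecMulVec_zero]

end IsometryGroup

section TwoPower

variable {n : ℕ}

/-- Reduction modulo `2` of the coefficients `ℤ/2ⁿ⁺¹`, the exponent being written `n + 1` because it
must be positive. -/
abbrev redTwo (n : ℕ) : ZMod (2 ^ (n + 1)) →+* ZMod 2 :=
  ZMod.castHom (dvd_pow_self 2 n.succ_ne_zero) (ZMod 2)

lemma redTwo_eq_zero_iff {a : ZMod (2 ^ (n + 1))} : redTwo n a = 0 ↔ 2 ∣ a.val := by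
  conv_lhs => rw [← ZMod.natCast_zmod_val a]
  rw [map_natCast, ZMod.natCast_eq_zero_iff]

lemma exists_eq_two_nsmul_of_redTwo_eq_zero {a : ZMod (2 ^ (n + 1))} (ha : redTwo n a = 0) :
    ∃ b, a = 2 • b := by
  obtain ⟨d, hd⟩ := redTwo_eq_zero_iff.1 ha
  refine ⟨d, ?_⟩
  rw [← ZMod.natCast_zmod_val a, hd, Nat.cast_mul, nsmul_eq_mul]

lemma redTwo_eq_zero_of_pow_nsmul {a : ZMod (2 ^ (n + 1))} {i : ℕ} (hi : i ≤ n)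
    (ha : 2 ^ i • a = 0) : redTwo n a = 0 := by
  rw [redTwo_eq_zero_iff]
  rw [← ZMod.natCast_zmod_val a, nsmul_eq_mul, ← Nat.cast_mul, ZMod.natCast_eq_zero_iff] at ha
  refine Nat.dvd_of_mul_dvd_mul_left (pow_pos two_pos i) ?_
  rw [← pow_succ]
  exact (pow_dvd_pow 2 (by lia)).trans ha

variable {ι : Type*} [Fintype ι] [DecidableEq ι]

/-- Reduction modulo `2` of a matrix, as an endomorphism of `𝔽₂^ι`. -/
def modTwo (n : ℕ) : Matrix ι ι (ZMod (2 ^ (n + 1))) →+* Module.End (ZMod 2) (ι → ZMod 2) :=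
  (toLinAlgEquiv' : _ ≃ₐ[ZMod 2] _).toRingHom.comp (redTwo n).mapMatrix

lemma modTwo_apply (a : Matrix ι ι (ZMod (2 ^ (n + 1)))) (x : ι → ZMod 2) :
    modTwo n a x = a.map (redTwo n) *ᵥ x :=
  rfl

lemma modTwo_eq_iff {a b : Matrix ι ι (ZMod (2 ^ (n + 1)))} :
    modTwo n a = modTwo n b ↔ a.map (redTwo n) = b.map (redTwo n) :=
  (toLinAlgEquiv' : _ ≃ₐ[ZMod 2] _).injective.eq_iff

lemma exists_eq_two_nsmul_of_modTwo_eq_zero {a : Matrix ι ι (ZMod (2 ^ (n + 1)))}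
    (ha : modTwo n a = 0) : ∃ b, a = 2 • b := by
  have entry (i j : ι) : ∃ b, a i j = 2 • b := by
    rw [← map_zero (modTwo n), modTwo_eq_iff] at ha
    exact exists_eq_two_nsmul_of_redTwo_eq_zero (by simpa using congrFun₂ ha i j)
  choose b hb using entry
  exact ⟨of b, ext hb⟩

variable (J : Matrix ι ι (ZMod (2 ^ (n + 1))))

/-- The bilinear form on `𝔽₂^ι` whose matrix is the reduction of `J`. -/
abbrev redForm : BilinForm (ZMod 2) (ι → ZMod 2) :=
  toBilin' (J.map (redTwo n))

lemma redForm_comp (u v : ι → ZMod (2 ^ (n + 1))) :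
    redForm J (redTwo n ∘ u) (redTwo n ∘ v) = redTwo n (toBilin' J u v) := by
  rw [toBilin'_apply', toBilin'_apply', RingHom.map_dotProduct]
  congr 1
  exact funext fun i ↦ ((redTwo n).map_mulVec J v i).symm

variable {J}

lemma isAlt_redForm (hJ : (toBilin' J).IsAlt) : (redForm J).IsAlt := fun x ↦ by
  obtain ⟨u, rfl⟩ := (ZMod.ringHom_surjective (redTwo n)).comp_left x
  rw [redForm_comp, hJ.self_eq_zero, map_zero]

lemma modTwo_vecMulVec (v : ι → ZMod (2 ^ (n + 1))) :
    modTwo n (vecMulVec v (v ᵥ* J)) = rankOne (redForm J) (redTwo n ∘ v) (redTwo n ∘ v) := by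
  refine LinearMap.ext fun x ↦ ?_
  rw [modTwo_apply, map_vecMulVec_vecMul, vecMulVec_mulVec, rankOne_apply, toBilin'_apply',
    dotProduct_mulVec, op_smul_eq_smul]

lemma modTwo_matTransvection (hJ : (toBilin' J).IsAlt) (v : ι → ZMod (2 ^ (n + 1))) :
    modTwo n (matTransvection hJ v) = sympTransvection (redForm J) (redTwo n ∘ v) := by
  rw [coe_matTransvection, map_add, map_one, modTwo_vecMulVec, sympTransvection_eq_one_add]

lemma isSelfAdjoint_modTwo_of_mem {i : ℕ} (hi : i < n) {S : GL ι (ZMod (2 ^ (n + 1)))}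
    (hS : S ∈ isometryGroup J) {a : Matrix ι ι (ZMod (2 ^ (n + 1)))}
    (hSa : (S : Matrix ι ι (ZMod (2 ^ (n + 1)))) = 1 + 2 ^ (i + 1) • a) :
    (redForm J).IsSelfAdjoint (modTwo n a) := by
  let red := (redTwo n).mapMatrix (m := ι)
  have expand : 2 ^ (i + 1) • (aᵀ * J + J * a + 2 ^ (i + 1) • (aᵀ * J * a)) = 0 := by
    rw [mem_isometryGroup, hSa, transpose_add, transpose_smul, transpose_one] at hS
    rw [← sub_eq_zero.2 hS]
    simp only [add_mul, mul_add, Matrix.one_mul, Matrix.mul_one, smul_mul_assoc, mul_smul_comm,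
      smul_add]
    abel
  have reduced : red (aᵀ * J + J * a + 2 ^ (i + 1) • (aᵀ * J * a)) = 0 :=
    ext fun k l ↦ redTwo_eq_zero_of_pow_nsmul hi (congrFun₂ expand k l)
  have adjoint : (red a)ᵀ * red J = red J * red a := by
    rwa [map_add, map_two_pow_nsmul, add_zero, map_add, map_mul, map_mul, ← ZModModule.sub_eq_add,
      sub_eq_zero] at reduced
  intro x y
  rw [toBilin'_apply', toBilin'_apply']
  calc (red a *ᵥ x) ⬝ᵥ red J *ᵥ y = x ⬝ᵥ ((red a)ᵀ * red J) *ᵥ y := by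
        rw [← mulVec_mulVec, mulVec_transpose, dotProduct_comm _ (_ ᵥ* _), ← dotProduct_mulVec,
          dotProduct_comm]
    _ = x ⬝ᵥ red J *ᵥ red a *ᵥ y := by rw [adjoint, mulVec_mulVec]

lemma exists_eq_matTransvection_mul (hn : 0 < n) (hJ : (toBilin' J).IsAlt)
    {x : GL ι (ZMod (2 ^ (n + 1)))} (hx : x ∈ isometryGroup J) {v : ι → ZMod (2 ^ (n + 1))}
    (hxv : modTwo n (x : Matrix ι ι (ZMod (2 ^ (n + 1)))) =
      sympTransvection (redForm J) (redTwo n ∘ v)) :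
    ∃ a, (redForm J).IsSelfAdjoint (modTwo n a) ∧
      (x : Matrix ι ι (ZMod (2 ^ (n + 1)))) = matTransvection hJ v * (1 + 2 • a) := by
  let t := matTransvection hJ v
  have ρ_eq_one : modTwo n ((t⁻¹ * x : GL ι _) : Matrix ι ι (ZMod (2 ^ (n + 1)))) = 1 := by
    rw [Units.val_mul, map_mul, hxv, ← modTwo_matTransvection hJ, ← map_mul, Units.inv_mul, map_one]
  obtain ⟨a, ha⟩ := exists_eq_two_nsmul_of_modTwo_eq_zero (n := n)
    (a := ((t⁻¹ * x : GL ι _) : Matrix ι ι (ZMod (2 ^ (n + 1)))) - 1)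
    (by rw [map_sub, ρ_eq_one, map_one, sub_self])
  have eq_one_add := eq_add_of_sub_eq' ha
  refine ⟨a, isSelfAdjoint_modTwo_of_mem hn (S := t⁻¹ * x) ?_ (by simpa using eq_one_add), ?_⟩
  · exact (isometryGroup J).mul_mem
      ((isometryGroup J).inv_mem (matTransvection_mem_isometryGroup hJ v)) hx
  · rw [← eq_one_add, ← Units.val_mul, mul_inv_cancel_left]

section Lift

variable {G : Subgroup (GL ι (ZMod (2 ^ (n + 1))))} (hJ : (toBilin' J).IsAlt)
  (hnd : (redForm J).Nondegenerate) (hG : G ≤ isometryGroup J) {g : ℕ} (hg : 2 ≤ g)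
  {v : ℕ → ι → ZMod (2 ^ (n + 1))}
  (hv : IsTransvectionChain (redForm J) g fun k ↦ redTwo n ∘ v k)
  (orthogonal : ∀ i < g, toBilin' J (v 0) (v (2 * (i + 1))) = 0)
  (lift : ∀ k ≤ 2 * g, ∃ x ∈ G, modTwo n (x : Matrix ι ι (ZMod (2 ^ (n + 1)))) =
    sympTransvection (redForm J) (redTwo n ∘ v k))

include hJ hnd hG hg hv orthogonal lift

lemma selfAdjointSubmodule_le_congruenceLayer_zero (hn : 0 < n) :
    (redForm J).selfAdjointSubmodule ≤ congruenceLayer (modTwo n) G 0 := by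
  have hω : (redForm J).IsAlt := isAlt_redForm hJ
  have lift_mul (k : ℕ) (hk : k ≤ 2 * g) : ∃ x ∈ G, ∃ a, (redForm J).IsSelfAdjoint (modTwo n a) ∧
      (x : Matrix ι ι (ZMod (2 ^ (n + 1)))) = matTransvection hJ (v k) * (1 + 2 • a) := by
    obtain ⟨x, hx, hxv⟩ := lift k hk
    exact ⟨x, hx, exists_eq_matTransvection_mul hn hJ (hG hx) hxv⟩
  obtain ⟨x, hx, a, ha, hxa⟩ := lift_mul 0 (Nat.zero_le _)
  refine hv.selfAdjointSubmodule_le (A := modTwo n a) (fun k hk m hm ↦ ?_) hnd hω hg ?_ ha ?_ ?_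
  · obtain ⟨y, hy, hyk⟩ := lift k hk
    have h := conj_mem_congruenceLayer hy hm
    rwa [map_inv_of_mul_self_eq_one _ hyk (sympTransvection_mul_self hω _), hyk] at h
  · rintro _ ⟨S, hS, b, hSb, rfl⟩
    exact isSelfAdjoint_modTwo_of_mem hn (hG hS) hSb
  · have h := add_conj_mem_of_square (ρ := modTwo n) hx (vecMulVec_mul_self_of_isAlt hJ (v 0)) hxa
    rwa [← coe_matTransvection hJ, modTwo_matTransvection, modTwo_vecMulVec,
      add_sympTransvection_conj _ ha] at h
  · intro i hi
    obtain ⟨y, hy, b, hb, hyb⟩ := lift_mul (2 * (i + 1)) (by lia)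
    have mul_self (k : ℕ) : modTwo n (matTransvection hJ (v k) : Matrix ι ι _) *
        modTwo n (matTransvection hJ (v k) : Matrix ι ι _) = 1 := by
      rw [modTwo_matTransvection, sympTransvection_mul_self hω]
    have h := add_conj_mem_of_commutator hx hy (commute_matTransvection hJ (orthogonal i hi))
      (mul_self _) (mul_self _) hxa hyb
    rw [modTwo_matTransvection, modTwo_matTransvection, add_sympTransvection_conj _ ha,
      add_sympTransvection_conj _ hb] at h
    exact ⟨_, h⟩

theorem mem_of_modTwo_eq_one {y : GL ι (ZMod (2 ^ (n + 1)))} (hy : y ∈ isometryGroup J)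
    (hρy : modTwo n (y : Matrix ι ι (ZMod (2 ^ (n + 1)))) = 1) : y ∈ G := by
  have hω : (redForm J).IsAlt := isAlt_redForm hJ
  have le_layer (hn : 0 < n) (i : ℕ) :
      (redForm J).selfAdjointSubmodule ≤ congruenceLayer (modTwo n) G i := by
    have zero := selfAdjointSubmodule_le_congruenceLayer_zero hJ hnd hG hg hv orthogonal lift hn
    have rankOne_mem : ∀ i x, rankOne (redForm J) x x ∈ congruenceLayer (modTwo n) G i := by
      intro i x
      induction i with
      | zero => exact zero (isSelfAdjoint_rankOne_self ⟨comm_of_isAlt hω⟩ x)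
      | succ i ih => exact mem_congruenceLayer_succ ih (rankOne_mul_self hω x)
    exact selfAdjointSubmodule_le_of_rankOne_mem hnd ⟨comm_of_isAlt hω⟩ (rankOne_mem i)
  refine mem_of_congruenceLayer_le (n := n) hG (fun a ↦ exists_eq_two_nsmul_of_modTwo_eq_zero)
    (fun a ↦ ?_) (fun i hi ↦ le_trans ?_ (le_layer (Nat.zero_lt_of_lt hi) i)) hy hρy
  · ext k l
    rw [Matrix.smul_apply, nsmul_eq_mul, CharP.cast_eq_zero, zero_mul, Matrix.zero_apply]
  · rintro _ ⟨S, hS, a, hSa, rfl⟩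
    exact isSelfAdjoint_modTwo_of_mem hi hS hSa

end Lift

end TwoPower

section StandardForm

variable (g : ℕ) (R : Type) [CommRing R]

lemma OmegaMat_apply (i j : Fin (2 * g)) : OmegaMat g R i j =
    if (i : ℕ) + 1 = j ∧ (j : ℕ) % 2 = 1 then 1
    else if (j : ℕ) + 1 = i ∧ (i : ℕ) % 2 = 1 then -1 else 0 :=
  rfl

lemma OmegaMat_map {S : Type} [CommRing S] (φ : R →+* S) :
    (OmegaMat g R).map φ = OmegaMat g S := by
  ext i j
  simp only [map_apply, OmegaMat_apply, apply_ite φ, map_one, map_neg, map_zero]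

lemma vecMul_OmegaMat (f : ℕ → R) (j : Fin (2 * g)) :
    ((fun i : Fin (2 * g) ↦ f i) ᵥ* OmegaMat g R) j =
      if (j : ℕ) % 2 = 1 then f (j - 1) else -f (j + 1) := by
  have hj := j.isLt
  split_ifs with h
  · rw [vecMul, dotProduct, Finset.sum_eq_single ⟨j - 1, by lia⟩]
    · rw [OmegaMat_apply, if_pos (by grind), mul_one]
    · intro i _ hi
      rw [OmegaMat_apply, if_neg (by grind), if_neg (by grind), mul_zero]
    · simp
  · rw [vecMul, dotProduct, Finset.sum_eq_single ⟨j + 1, by lia⟩]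
    · rw [OmegaMat_apply, if_neg (by grind), if_pos (by grind), mul_neg_one]
    · intro i _ hi
      rw [OmegaMat_apply, if_neg (by grind), if_neg (by grind), mul_zero]
    · simp

lemma OmegaMat_mul_self : OmegaMat g R * OmegaMat g R = -1 := by
  ext i j
  have h := vecMul_OmegaMat g R (fun k ↦ if (i : ℕ) + 1 = k ∧ k % 2 = 1 then 1
    else if k + 1 = i ∧ (i : ℕ) % 2 = 1 then -1 else 0) j
  refine h.trans ?_
  rw [neg_apply, one_apply]
  grind

lemma nondegenerate_toBilin'_OmegaMat (K : Type) [Field K] :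
    (toBilin' (OmegaMat g K)).Nondegenerate := by
  rw [nondegenerate_toBilin'_iff]
  refine nondegenerate_of_det_ne_zero (IsUnit.ne_zero ?_)
  refine isUnit_det_of_right_inverse (B := -OmegaMat g K) ?_
  rw [mul_neg, OmegaMat_mul_self, neg_neg]

lemma isAlt_toBilin'_OmegaMat : (toBilin' (OmegaMat g R)).IsAlt := fun x ↦ by
  rw [toBilin'_apply, ← AddSubgroup.mem_bot]
  refine sum_sum_mem_of_add_swap_mem (fun i ↦ ?_) (fun i j ↦ ?_) Finset.univ
  · rw [AddSubgroup.mem_bot, OmegaMat_apply, if_neg (by lia), if_neg (by lia), mul_zero, zero_mul]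
  · have skew : OmegaMat g R i j = -OmegaMat g R j i := by
      simp only [OmegaMat_apply]
      grind
    rw [AddSubgroup.mem_bot, skew]
    ring

end StandardForm

section Roots

variable (g : ℕ) (R : Type) [CommRing R]

/-- A lift to `R ^ (2 * g)` of the vector of `𝔽₂ ^ (2 * g)` that `PsiMat g` maps to
`e_k + e_{k+1}` modulo `t`, where `k = 0, …, 2 * g` and coordinates are counted from `0`. -/
def root (k : ℕ) : Fin (2 * g) → R := fun j ↦
  if (j : ℕ) = k ∨ (j : ℕ) + 2 = k + k % 2 then 1 else 0

lemma root_apply (k : ℕ) (j : Fin (2 * g)) :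
    root g R k j = if (j : ℕ) = k ∨ (j : ℕ) + 2 = k + k % 2 then 1 else 0 :=
  rfl

lemma comp_root {S : Type} [CommRing S] (φ : R →+* S) (k : ℕ) :
    φ ∘ root g R k = root g S k := by
  ext j
  simp only [Function.comp_apply, root_apply, apply_ite φ, map_one, map_zero]

variable {g R}

lemma dotProduct_root (f : ℕ → R) {k : ℕ} (hk : k ≤ 2 * g) :
    (fun j : Fin (2 * g) ↦ f j) ⬝ᵥ root g R k =
      (if k < 2 * g then f k else 0) + if 0 < k then f (k + k % 2 - 2) else 0 := by
  have split (j : ℕ) : f j * (if j = k ∨ j + 2 = k + k % 2 then 1 else 0) =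
      (if j = k then f j else 0) + if j = k + k % 2 - 2 then (if 0 < k then f j else 0) else 0 := by
    grind
  calc (fun j : Fin (2 * g) ↦ f j) ⬝ᵥ root g R k
      = ∑ j ∈ Finset.range (2 * g), f j * (if j = k ∨ j + 2 = k + k % 2 then 1 else 0) :=
        Fin.sum_univ_eq_sum_range (fun j ↦ f j * if j = k ∨ j + 2 = k + k % 2 then 1 else 0) _
    _ = _ := by
        simp only [split, Finset.sum_add_distrib, Finset.sum_ite_eq', Finset.mem_range]
        grind

lemma toBilin'_OmegaMat_root_zero_even {i : ℕ} (hi : i < g) :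
    toBilin' (OmegaMat g R) (root g R 0) (root g R (2 * (i + 1))) = 0 := by
  rw [toBilin'_apply', dotProduct_mulVec]
  let f (j : ℕ) : R := if j = 1 then 1 else 0
  have row : root g R 0 ᵥ* OmegaMat g R = fun j : Fin (2 * g) ↦ f j := by
    ext j
    refine (vecMul_OmegaMat g R (fun k ↦ if k = 0 ∨ k + 2 = 0 then 1 else 0) j).trans ?_
    grind
  rw [row, dotProduct_root f (by lia)]
  grind

lemma root_vecMul_OmegaMat {k : ℕ} (hk : k ≤ 2 * g) (j : Fin (2 * g)) :
    (root g (ZMod 2) k ᵥ* OmegaMat g (ZMod 2)) j =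
      PsiMat g ⟨k, by lia⟩ j + PsiMat g ⟨k + 1, by lia⟩ j := by
  refine (vecMul_OmegaMat g (ZMod 2)
    (fun i ↦ if i = k ∨ i + 2 = k + k % 2 then 1 else 0) j).trans ?_
  simp only [PsiMat, of_apply]
  grind

lemma PsiMat_mulVec_root {k : ℕ} (hk : k ≤ 2 * g) (i : Fin (2 * g + 2)) :
    (PsiMat g *ᵥ root g (ZMod 2) k) i =
      (if (i : ℕ) = k ∨ (i : ℕ) = k + 1 then 1 else 0) + if k = 2 * g then 1 else 0 := by
  refine (dotProduct_root (fun j ↦ if j % 2 = 0 then (if (i : ℕ) < j + 2 then 1 else 0)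
    else (if (i : ℕ) < j ∨ (i : ℕ) = j + 1 then 1 else 0)) hk).trans ?_
  grind

lemma toBilin'_OmegaMat_root {j k : ℕ} (hj : j ≤ 2 * g) (hk : k ≤ 2 * g) :
    toBilin' (OmegaMat g (ZMod 2)) (root g (ZMod 2) j) (root g (ZMod 2) k) =
      (if j = k ∨ j = k + 1 then 1 else 0) + if j + 1 = k ∨ j = k then 1 else 0 := by
  have row : root g (ZMod 2) j ᵥ* OmegaMat g (ZMod 2) =
      PsiMat g ⟨j, by lia⟩ + PsiMat g ⟨j + 1, by lia⟩ :=
    funext (root_vecMul_OmegaMat hj)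
  rw [toBilin'_apply', dotProduct_mulVec, row, add_dotProduct]
  change (PsiMat g *ᵥ _) _ + (PsiMat g *ᵥ _) _ = _
  rw [PsiMat_mulVec_root hk, PsiMat_mulVec_root hk]
  grind

lemma sum_root_even (m : ℕ) (j : Fin (2 * g)) :
    (∑ i ∈ Finset.range (m + 1), root g (ZMod 2) (2 * i)) j =
      if (j : ℕ) = 2 * m then 1 else 0 := by
  induction m with
  | zero =>
    rw [zero_add, Finset.sum_range_one, root_apply]
    grind
  | succ m ih =>
    rw [Finset.sum_range_succ, Pi.add_apply, ih, root_apply]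
    grind

lemma span_root_eq_top :
    Submodule.span (ZMod 2) (root g (ZMod 2) '' Set.Iic (2 * g)) = ⊤ := by
  set W := Submodule.span (ZMod 2) (root g (ZMod 2) '' Set.Iic (2 * g))
  have root_mem (k : ℕ) (hk : k ≤ 2 * g) : root g (ZMod 2) k ∈ W :=
    Submodule.subset_span ⟨k, hk, rfl⟩
  have even_mem (m : ℕ) (hm : m ≤ g) : ∑ i ∈ Finset.range (m + 1), root g (ZMod 2) (2 * i) ∈ W :=
    W.sum_mem fun i hi ↦ root_mem _ (by grind)
  rw [eq_top_iff, ← (Pi.basisFun (ZMod 2) (Fin (2 * g))).span_eq, Submodule.span_le]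
  rintro _ ⟨j, rfl⟩
  rw [Pi.basisFun_apply, SetLike.mem_coe]
  rcases Nat.even_or_odd' j with ⟨m, hm | hm⟩
  · convert even_mem m (by lia) using 1
    ext i
    rw [sum_root_even, Pi.single_apply]
    grind
  · convert W.add_mem (root_mem (2 * m + 1) (by lia)) (even_mem m (by lia)) using 1
    ext i
    rw [Pi.add_apply, sum_root_even, Pi.single_apply, root_apply]
    grind

lemma isTransvectionChain_root :
    IsTransvectionChain (toBilin' (OmegaMat g (ZMod 2))) g (root g (ZMod 2)) where
  apply_succ k hk := by
    rw [toBilin'_OmegaMat_root (by lia) (by lia)]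
    grind
  apply_of_lt j k hjk hk := by
    rw [toBilin'_OmegaMat_root (by lia) (by lia)]
    grind
  sum_even := funext fun j ↦ by rw [sum_root_even, if_neg j.isLt.ne, Pi.zero_apply]
  span_eq_top := span_root_eq_top

end Roots

section Permutation

lemma permMat_mul_apply {g : ℕ} {m : Type*} (σ : Equiv.Perm (Fin (2 * g + 2)))
    (M : Matrix (Fin (2 * g + 2)) m (ZMod 2)) (i : Fin (2 * g + 2)) (j : m) :
    (permMat g σ * M) i j = M (σ⁻¹ i) j := by
  rw [mul_apply, Finset.sum_eq_single (σ⁻¹ i)]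
  · simp [permMat]
  · intro k _ hk
    rw [permMat, of_apply, if_neg (fun h ↦ hk (Equiv.Perm.eq_inv_iff_eq.2 h)), zero_mul]
  · simp

lemma representsPerm_matTransvection_root {g k : ℕ} (hk : k ≤ 2 * g) :
    representsPerm g (matTransvection (isAlt_toBilin'_OmegaMat g (ZMod 2)) (root g (ZMod 2) k))
      (Equiv.swap ⟨k, by lia⟩ ⟨k + 1, by lia⟩) := by
  intro j
  let p : Fin (2 * g + 2) := ⟨k, by lia⟩
  let q : Fin (2 * g + 2) := ⟨k + 1, by lia⟩
  let c : ZMod 2 := if k = 2 * g then 1 else 0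
  refine Submodule.mem_span_singleton.2 ⟨c * (PsiMat g p j + PsiMat g q j), funext fun i ↦ ?_⟩
  rw [coe_matTransvection, Matrix.mul_add, Matrix.mul_one, mul_vecMulVec, Matrix.sub_apply,
    Matrix.add_apply, vecMulVec_apply, PsiMat_mulVec_root hk, root_vecMul_OmegaMat hk,
    permMat_mul_apply, Equiv.swap_inv, Pi.smul_apply, tvec, smul_eq_mul, mul_one]
  change c * (PsiMat g p j + PsiMat g q j) = PsiMat g i j +
    ((if (i : ℕ) = k ∨ (i : ℕ) = k + 1 then 1 else 0) + c) * (PsiMat g p j + PsiMat g q j) -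
      PsiMat g (Equiv.swap p q i) j
  have hip : (i : ℕ) = k ↔ i = p := by grind
  have hiq : (i : ℕ) = k + 1 ↔ i = q := by grind
  rw [Equiv.swap_apply_def]
  grind

end Permutation

section Preimage

/-- Entrywise reduction `GL_{2g}(ℤ/2ⁿ⁺¹) → GL_{2g}(ℤ/2)`. -/
def redGL (g n : ℕ) : GL (Fin (2 * g)) (ZMod (2 ^ (n + 1))) →* GL (Fin (2 * g)) (ZMod 2) :=
  Units.map (redTwo n).mapMatrix.toMonoidHom

lemma redGL_eq_iff {g n : ℕ} {x y : GL (Fin (2 * g)) (ZMod (2 ^ (n + 1)))} :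
    redGL g n x = redGL g n y ↔ modTwo n x.1 = modTwo n y.1 :=
  Units.ext_iff.trans modTwo_eq_iff.symm

lemma redGL_matTransvection_root (g n k : ℕ) :
    redGL g n (matTransvection (isAlt_toBilin'_OmegaMat g _) (root g _ k)) =
      matTransvection (isAlt_toBilin'_OmegaMat g (ZMod 2)) (root g (ZMod 2) k) := by
  refine Units.ext ?_
  change (redTwo n).mapMatrix _ = _
  rw [coe_matTransvection, coe_matTransvection, map_add, map_one, RingHom.mapMatrix_apply,
    map_vecMulVec_vecMul, comp_root, OmegaMat_map]

/-- The full preimage of the embedded `S_{2g+2} ⊆ Sp_{2g}(ℤ/2)` in `Sp_{2g}(ℤ/2ⁿ⁺¹)`. -/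
def permPreimage (g n : ℕ) : Set (GL (Fin (2 * g)) (ZMod (2 ^ (n + 1)))) :=
  {x | x ∈ SpSet g (ZMod (2 ^ (n + 1))) ∧ ∃ σ, representsPerm g (redGL g n x).1 σ}

theorem maximal_monodromy_stmt15_general {g n : ℕ} (hg : 2 ≤ g)
    {G : Subgroup (GL (Fin (2 * g)) (ZMod (2 ^ (n + 1))))}
    (hsub : (G : Set (GL (Fin (2 * g)) (ZMod (2 ^ (n + 1))))) ⊆ permPreimage g n)
    (himg : ∀ B : GL (Fin (2 * g)) (ZMod 2), (∃ σ, representsPerm g B.1 σ) →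
      B ∈ G.map (redGL g n)) :
    (G : Set (GL (Fin (2 * g)) (ZMod (2 ^ (n + 1))))) = permPreimage g n := by
  let J := OmegaMat g (ZMod (2 ^ (n + 1)))
  have hJ : (toBilin' J).IsAlt := isAlt_toBilin'_OmegaMat g _
  have redForm_eq : redForm J = toBilin' (OmegaMat g (ZMod 2)) := by
    rw [redForm, OmegaMat_map]
  have hG : G ≤ isometryGroup J := fun x hx ↦ (hsub hx).1
  have chain : IsTransvectionChain (redForm J) g fun k ↦ redTwo n ∘ root g _ k := by
    simpa only [redForm_eq, comp_root] using isTransvectionChain_root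
  have lift (k : ℕ) (hk : k ≤ 2 * g) : ∃ x ∈ G, modTwo n x.1 =
      sympTransvection (redForm J) (redTwo n ∘ root g _ k) := by
    obtain ⟨x, hx, hxk⟩ := himg _ ⟨_, representsPerm_matTransvection_root hk⟩
    refine ⟨x, hx, ?_⟩
    rw [← modTwo_matTransvection hJ, ← redGL_eq_iff, hxk, redGL_matTransvection_root]
  refine hsub.antisymm fun y ⟨hy, hyσ⟩ ↦ ?_
  obtain ⟨x, hx, hxy⟩ := himg _ hyσ
  refine (G.mul_mem_cancel_left (G.inv_mem hx)).1 (mem_of_modTwo_eq_one hJ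
    (redForm_eq ▸ nondegenerate_toBilin'_OmegaMat g _) hG hg chain
    (fun i hi ↦ toBilin'_OmegaMat_root_zero_even hi) lift
    (mul_mem (inv_mem (hG hx)) hy) ?_)
  rw [Units.val_mul, map_mul, ← redGL_eq_iff.1 hxy, ← map_mul, Units.inv_mul, map_one]

end Preimage

/-- No proper subgroup of `S̃_8(8) ⊆ Sp_6(ℤ/8ℤ)` has mod-2 image equal to the full embedded
`S_8 ⊆ Sp_6(ℤ/2ℤ)`: every subgroup `G ⊆ S̃_8(8)` whose mod-2 image equals the embedded `S_8`
satisfies `G = S̃_8(8)`. -/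
theorem maximal_monodromy_stmt15
    (G : Subgroup (GL (Fin (2*3)) (ZMod (2^3))))
    (hsub : (G : Set (GL (Fin (2*3)) (ZMod (2^3)))) ⊆ StildeMod8Set)
    (himg : ∀ B : GL (Fin (2*3)) (ZMod 2),
      (∃ σ : Equiv.Perm (Fin (2*3+2)),
        representsPerm 3 (B : Matrix (Fin (2*3)) (Fin (2*3)) (ZMod 2)) σ)
      ↔ B ∈ Subgroup.map red82 G) :
    (G : Set (GL (Fin (2*3)) (ZMod (2^3)))) = StildeMod8Set :=
  maximal_monodromy_stmt15_general (g := 3) (n := 2) (by norm_num) hsub fun B ↦ (himg B).1
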